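/- Every continuous map f : M → N between smooth manifolds is homotopic to a smooth map; if f is smooth on (a neighborhood of) a closed subset A ⊂ M, the homotopy can be chosen relative to A, so the resulting smooth map agrees with f on A. -/

import Mathlib

/- Framework: embedded submanifolds of Euclidean space (Guillemin–Pollack style),
tangent spaces via velocity vectors of curves, local-straightening charts. -/

noncomputable section
open Set Function
open scoped RealInnerProductSpace

abbrev Euc (n : ℕ) : Type := EuclideanSpace ℝ (Fin n)

/-- Velocity vectors at `x` of smooth curves through `x` contained in `S`. -/
def tangentSet {E : Type*} [NormedAddCommGroup E] [NormedSpace ℝ E] (S : Set E) (x : E) : Set E :=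
  {v | ∃ γ : ℝ → E, (∀ t, γ t ∈ S) ∧ γ 0 = x ∧ HasDerivAt γ v 0}

/-- The tangent space of a subset `S` at `x`, as a linear subspace of the ambient space. -/
def tangentSpaceOf {E : Type*} [NormedAddCommGroup E] [NormedSpace ℝ E] (S : Set E) (x : E) :
    Submodule ℝ E := Submodule.span ℝ (tangentSet S x)

/-- `S` is a smooth embedded `k`-dimensional submanifold (without boundary):
around every point there is a smooth local straightening diffeomorphism carrying `S`
onto a `k`-dimensional linear subspace. -/
def IsSubmanifoldOfDim {E : Type*} [NormedAddCommGroup E] [NormedSpace ℝ E]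
    (k : ℕ) (S : Set E) : Prop :=
  ∀ x ∈ S, ∃ (U V : Set E) (φ ψ : E → E) (K : Submodule ℝ E),
    Module.finrank ℝ K = k ∧ IsOpen U ∧ IsOpen V ∧ x ∈ U ∧
    ContDiffOn ℝ (⊤ : ℕ∞) φ U ∧ ContDiffOn ℝ (⊤ : ℕ∞) ψ V ∧
    MapsTo φ U V ∧ MapsTo ψ V U ∧
    (∀ y ∈ U, ψ (φ y) = y) ∧ (∀ z ∈ V, φ (ψ z) = z) ∧
    S ∩ U = U ∩ φ ⁻¹' (K : Set E)

/-! The nearest-point projection onto `N` is a smooth retraction of a neighborhood `W` of `N`.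
Indeed, a point `y` of `N` nearest to `z` makes `z - y` orthogonal to `N`. In a local
parametrization `ψ`, the derivative of this equation in the parameter, at a point of `N` itself, is
`-⟪dψ v, dψ w⟫`. It is nondegenerate, so the implicit function theorem applies. A partition of unity
yields a smooth `g`, equal to `f` on `A`, such that the segment from `f x` to `g x` stays in `W`,
and the homotopy is the retraction of the straight line from `f` to `g`. -/

open Filter (Tendsto)
open scoped ContDiff Manifold Topology

section ImplicitFunction

variable {𝕜 E₁ E₂ F : Type*} [RCLike 𝕜]
  [NormedAddCommGroup E₁] [NormedSpace 𝕜 E₁]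
  [NormedAddCommGroup E₂] [NormedSpace 𝕜 E₂] [CompleteSpace E₂]
  [NormedAddCommGroup F] [NormedSpace 𝕜 F]
  {f : E₁ × E₂ → F} {u : E₁ × E₂} {n : ℕ∞ω}

lemma eventually_isInvertible_fderiv_comp_inr (hf : ContDiffAt 𝕜 n f u) (hn : n ≠ 0)
    (hinv : (fderiv 𝕜 f u ∘L .inr 𝕜 E₁ E₂).IsInvertible) :
    ∀ᶠ v in 𝓝 u, (fderiv 𝕜 f v ∘L .inr 𝕜 E₁ E₂).IsInvertible := by
  have hcont : ContinuousAt (fun v => fderiv 𝕜 f v ∘L .inr 𝕜 E₁ E₂) u :=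
    (hf.continuousAt_fderiv hn).clm_comp continuousAt_const
  exact hcont.eventually_mem (ContinuousLinearEquiv.isOpen.mem_nhds hinv)

variable [CompleteSpace E₁] [CompleteSpace F]

/-- For `n = ∞`, regularity of the implicit function at the base point alone would not give
regularity on a neighborhood. At a nearby point of the graph the implicit function theorem applies
again, and the two implicit functions agree by uniqueness. -/
lemma eventually_contDiffAt_implicitFunction (hf : ∀ᶠ v in 𝓝 u, ContDiffAt 𝕜 n f v) (hn : n ≠ 0)
    (hinv : (fderiv 𝕜 f u ∘L .inr 𝕜 E₁ E₂).IsInvertible) :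
    ∀ᶠ x in 𝓝 u.1, ContDiffAt 𝕜 n (hf.self_of_nhds.implicitFunction hn hinv) x := by
  set ρ := hf.self_of_nhds.implicitFunction hn hinv
  have hρ : ContDiffAt 𝕜 1 ρ u.1 :=
    (hf.self_of_nhds.contDiffAt_implicitFunction hn hinv).of_le
      (ENat.one_le_iff_ne_zero_withTop.2 hn)
  have hρu : (u.1, ρ u.1) = u :=
    Prod.ext rfl (hf.self_of_nhds.implicitFunction_apply_self hn hinv)
  have hgraph : Tendsto (fun x => (x, ρ x)) (𝓝 u.1) (𝓝 (u.1, ρ u.1)) :=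
    continuousAt_id.prodMk hρ.continuousAt
  rw [hρu] at hgraph
  filter_upwards [hρ.eventually (by simp), hgraph.eventually hf,
    hgraph.eventually (eventually_isInvertible_fderiv_comp_inr hf.self_of_nhds hn hinv),
    (hf.self_of_nhds.eventually_apply_implicitFunction hn hinv).eventually_nhds]
    with x hρx hfx hinvx hfib
  refine (hfx.contDiffAt_implicitFunction hn hinvx).congr_of_eventuallyEq ?_
  have hgraphx : Tendsto (fun y => (y, ρ y)) (𝓝 x) (𝓝 (x, ρ x)) :=
    continuousAt_id.prodMk hρx.continuousAt
  filter_upwards [hfib, hgraphx.eventually (hfx.eventually_apply_eq_iff_implicitFunction hn hinvx)]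
    with y hy hiff
  exact (hiff.1 (hy.trans hfib.self_of_nhds.symm)).symm

end ImplicitFunction

section NearestPoint

/-- `y` is a point of `S` at minimal distance from `z`. -/
def IsNearestPoint {X : Type*} [PseudoMetricSpace X] (S : Set X) (z y : X) : Prop :=
  y ∈ S ∧ IsMinOn (dist z) S y

/-- The nearest-point projection onto `S`, a choice of nearest point of `S`; its value is arbitrary
where no nearest point exists. -/
def nearestPoint {X : Type*} [PseudoMetricSpace X] (S : Set X) (z : X) : X :=
  Classical.epsilon (h := ⟨z⟩) (IsNearestPoint S z)

variable {X : Type*} [PseudoMetricSpace X] {S : Set X} {x y z : X}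

lemma isNearestPoint_nearestPoint (h : ∃ y, IsNearestPoint S z y) :
    IsNearestPoint S z (nearestPoint S z) :=
  Classical.epsilon_spec h

lemma IsNearestPoint.dist_le (h : IsNearestPoint S z y) (hx : x ∈ S) :
    dist y x ≤ 2 * dist z x := by
  have hmin : dist z y ≤ dist z x := h.2 hx
  linarith [dist_triangle_left y x z]

lemma eventually_exists_isNearestPoint [LocallyCompactSpace S] (hx : x ∈ S) :
    ∀ᶠ z in 𝓝 x, ∃ y, IsNearestPoint S z y := by
  obtain ⟨T, hT, hTx⟩ := exists_compact_mem_nhds (⟨x, hx⟩ : S)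
  obtain ⟨ε, hε, hball⟩ : ∃ ε > 0, Metric.ball x ε ∩ S ⊆ Subtype.val '' T := by
    rw [← Metric.mem_nhdsWithin_iff, nhdsWithin_eq_map_subtype_coe hx]
    exact Filter.image_mem_map hTx
  filter_upwards [Metric.ball_mem_nhds x (half_pos hε)] with z hz
  rw [Metric.mem_ball] at hz
  have hxT : x ∈ Subtype.val '' T := hball ⟨Metric.mem_ball_self hε, hx⟩
  obtain ⟨y, hyT, hmin⟩ := (hT.image continuous_subtype_val).exists_isMinOn ⟨x, hxT⟩
    (f := dist z) (by fun_prop)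
  refine ⟨y, Subtype.coe_image_subset S T hyT, fun y' hy' => ?_⟩
  by_cases hclose : dist y' x < ε
  · exact hmin (hball ⟨hclose, hy'⟩)
  · have hzy : dist z y ≤ dist z x := hmin hxT
    change dist z y ≤ dist z y'
    linarith [dist_triangle_left y' x z]

lemma eventually_isNearestPoint_nearestPoint [LocallyCompactSpace S] (hx : x ∈ S) :
    ∀ᶠ z in 𝓝 x, IsNearestPoint S z (nearestPoint S z) :=
  (eventually_exists_isNearestPoint hx).mono fun _ => isNearestPoint_nearestPoint

lemma tendsto_nearestPoint [LocallyCompactSpace S] (hx : x ∈ S) :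
    Tendsto (nearestPoint S) (𝓝 x) (𝓝[S] x) := by
  have hnear := eventually_isNearestPoint_nearestPoint hx
  refine tendsto_nhdsWithin_iff.2 ⟨?_, hnear.mono fun _ hz => hz.1⟩
  have hbound : Tendsto (fun z => 2 * dist z x) (𝓝 x) (𝓝 0) :=
    Continuous.tendsto' (by fun_prop) _ _ (by simp)
  refine tendsto_iff_dist_tendsto_zero.2 (squeeze_zero' (.of_forall fun _ => dist_nonneg) ?_ hbound)
  filter_upwards [hnear] with z hz using hz.dist_le hx

lemma nearestPoint_of_mem {Y : Type*} [MetricSpace Y] {S : Set Y} {x : Y} (hx : x ∈ S) :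
    nearestPoint S x = x := by
  have hself : IsNearestPoint S x x := ⟨hx, fun y _ => by simp⟩
  simpa using (isNearestPoint_nearestPoint ⟨x, hself⟩).dist_le hx

end NearestPoint

section NormalProjection

variable {E P : Type*} [NormedAddCommGroup E] [InnerProductSpace ℝ E]
  [NormedAddCommGroup P] [NormedSpace ℝ P] {ψ : P → E} {k : P} {n : ℕ∞ω}

/-- The functional `v ↦ ⟪z - ψ k, dψ_k v⟫` attached to `p = (z, k)`. It vanishes exactly when
`z - ψ k` is normal to the image of `ψ` at `ψ k`, which is the critical point equation for the
distance from `z` along `ψ`. -/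
def normalDefect (ψ : P → E) (p : E × P) : P →L[ℝ] ℝ :=
  innerSL ℝ (p.1 - ψ p.2) ∘L fderiv ℝ ψ p.2

lemma normalDefect_eq_zero_of_isLocalMin_dist {z : E} (hψ : DifferentiableAt ℝ ψ k)
    (hmin : IsLocalMin (fun k' => dist z (ψ k')) k) : normalDefect ψ (z, k) = 0 := by
  have hmin_sq : IsLocalMin (fun k' => ‖z - ψ k'‖ ^ 2) k := by
    filter_upwards [hmin] with k' hk'
    simp only [← dist_eq_norm]
    gcongr
  have hcrit := hmin_sq.hasFDerivAt_eq_zero (hψ.hasFDerivAt.const_sub z).norm_sq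
  ext v
  have hv : inner ℝ (ψ k - z) (fderiv ℝ ψ k v) = 0 := by
    simpa [inner_sub_left] using DFunLike.congr_fun hcrit v
  change inner ℝ (z - ψ k) (fderiv ℝ ψ k v) = 0
  rw [← neg_sub, inner_neg_left, hv, neg_zero]

lemma contDiffAt_normalDefect {z : E} (hψ : ContDiffAt ℝ (n + 1) ψ k) :
    ContDiffAt ℝ n (normalDefect ψ) (z, k) := by
  have hoffset : ContDiffAt ℝ n (fun p : E × P => p.1 - ψ p.2) (z, k) :=
    contDiffAt_fst.sub ((hψ.of_le le_self_add).comp (z, k) contDiffAt_snd)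
  have hderiv : ContDiffAt ℝ n (fun p : E × P => fderiv ℝ ψ p.2) (z, k) :=
    hψ.fderiv_right_succ.comp (z, k) contDiffAt_snd
  exact ((innerSL ℝ).contDiff.contDiffAt.comp (z, k) hoffset).clm_comp hderiv

/-- The second derivative of `ψ` does not enter, since it is paired with `z - ψ k = 0`. -/
lemma fderiv_normalDefect_apply_inr (hψ : ContDiffAt ℝ 2 ψ k) (v w : P) :
    fderiv ℝ (normalDefect ψ) (ψ k, k) (0, v) w =
      -inner ℝ (fderiv ℝ ψ k v) (fderiv ℝ ψ k w) := by
  have hdiff : DifferentiableAt ℝ ψ k := hψ.differentiableAt (by simp)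
  have hoffset : HasFDerivAt (fun p : E × P => innerSL ℝ (p.1 - ψ p.2)) _ (ψ k, k) :=
    (innerSL ℝ).hasFDerivAt.comp (ψ k, k)
      (hasFDerivAt_fst.sub (hdiff.hasFDerivAt.comp (ψ k, k) hasFDerivAt_snd))
  have hderiv : HasFDerivAt (fun p : E × P => fderiv ℝ ψ p.2) _ (ψ k, k) :=
    ((hψ.fderiv_right (m := 1) (by norm_num)).differentiableAt
      (by simp)).hasFDerivAt.comp (ψ k, k) hasFDerivAt_snd
  have hdefect : HasFDerivAt (normalDefect ψ) _ (ψ k, k) := hoffset.clm_comp hderiv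
  rw [hdefect.fderiv]
  simp [innerSL_apply_apply ℝ]

variable [FiniteDimensional ℝ P]

lemma isInvertible_fderiv_normalDefect_comp_inr (hψ : ContDiffAt ℝ 2 ψ k)
    (hinj : Injective (fderiv ℝ ψ k)) :
    (fderiv ℝ (normalDefect ψ) (ψ k, k) ∘L .inr ℝ E P).IsInvertible := by
  set L := fderiv ℝ (normalDefect ψ) (ψ k, k) ∘L .inr ℝ E P
  have hL : Injective L := by
    refine (injective_iff_map_eq_zero L).2 fun v hv => ?_
    have hvv : L v v = -inner ℝ (fderiv ℝ ψ k v) (fderiv ℝ ψ k v) :=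
      fderiv_normalDefect_apply_inr hψ v v
    refine (map_eq_zero_iff _ hinj).1 (inner_self_eq_zero (𝕜 := ℝ).1 ?_)
    simpa [hv] using hvv
  have hdim : Module.finrank ℝ P = Module.finrank ℝ (P →L[ℝ] ℝ) :=
    Subspace.dual_finrank_eq.symm.trans LinearMap.toContinuousLinearMap.finrank_eq
  exact ⟨(LinearEquiv.ofInjectiveOfFinrankEq L.toLinearMap hL hdim).toContinuousLinearEquiv, rfl⟩

lemma exists_contDiffAt_eq_of_isLocalMin_dist [CompleteSpace E] (hn : n ≠ 0)
    (hψ : ∀ᶠ k' in 𝓝 k, ContDiffAt ℝ (n + 1) ψ k') (hinj : Injective (fderiv ℝ ψ k)) :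
    ∃ ρ : E → P, (∀ᶠ z in 𝓝 (ψ k), ContDiffAt ℝ n ρ z) ∧ ρ (ψ k) = k ∧
      ∀ᶠ p in 𝓝 (ψ k, k), IsLocalMin (fun k' => dist p.1 (ψ k')) p.2 → ρ p.1 = p.2 := by
  have : CompleteSpace P := FiniteDimensional.complete ℝ P
  have hψ_snd : ∀ᶠ p in 𝓝 (ψ k, k), ContDiffAt ℝ (n + 1) ψ p.2 :=
    continuousAt_snd.tendsto.eventually hψ
  have hF : ∀ᶠ p in 𝓝 (ψ k, k), ContDiffAt ℝ n (normalDefect ψ) p :=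
    hψ_snd.mono fun p => contDiffAt_normalDefect
  have htwo : 2 ≤ n + 1 :=
    one_add_one_eq_two.symm.trans_le (by gcongr; exact ENat.one_le_iff_ne_zero_withTop.2 hn)
  have hinv := isInvertible_fderiv_normalDefect_comp_inr (hψ.self_of_nhds.of_le htwo) hinj
  refine ⟨hF.self_of_nhds.implicitFunction hn hinv,
    eventually_contDiffAt_implicitFunction hF hn hinv,
    hF.self_of_nhds.implicitFunction_apply_self hn hinv, ?_⟩
  filter_upwards [hψ_snd, hF.self_of_nhds.eventually_apply_eq_iff_implicitFunction hn hinv]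
    with p hp hiff hmin
  refine hiff.1 ?_
  rw [normalDefect_eq_zero_of_isLocalMin_dist (hp.differentiableAt (by simp)) hmin]
  simp [normalDefect]

end NormalProjection

section LocalParametrization

variable {E P : Type*} [NormedAddCommGroup E] [NormedSpace ℝ E]
  [NormedAddCommGroup P] [NormedSpace ℝ P]

/-- `ψ` is a smooth parametrization of `S` around `x`, with coordinate map `κ` inverting it. All
conditions are germs: nothing is required of `ψ` away from `κ x`, nor of `κ` away from `x`. -/
structure IsLocalParametrization (S : Set E) (x : E) (ψ : P → E) (κ : E → P) : Prop where
  contDiffAt : ∀ᶠ k in 𝓝 (κ x), ContDiffAt ℝ ∞ ψ k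
  mem : ∀ᶠ k in 𝓝 (κ x), ψ k ∈ S
  left_inv : ∀ᶠ k in 𝓝 (κ x), κ (ψ k) = k
  differentiableAt_coord : DifferentiableAt ℝ κ x
  right_inv : ∀ᶠ y in 𝓝[S] x, ψ (κ y) = y

namespace IsLocalParametrization

variable {S : Set E} {x : E} {ψ : P → E} {κ : E → P}

lemma apply_coord (h : IsLocalParametrization S x ψ κ) (hx : x ∈ S) : ψ (κ x) = x :=
  h.right_inv.self_of_nhdsWithin hx

lemma injective_fderiv (h : IsLocalParametrization S x ψ κ) (hx : x ∈ S) :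
    Injective (fderiv ℝ ψ (κ x)) := by
  have hψ : HasFDerivAt ψ (fderiv ℝ ψ (κ x)) (κ x) :=
    (h.contDiffAt.self_of_nhds.differentiableAt (by simp)).hasFDerivAt
  have hκ : HasFDerivAt κ (fderiv ℝ κ x) (ψ (κ x)) := by
    rw [h.apply_coord hx]
    exact h.differentiableAt_coord.hasFDerivAt
  have hid : fderiv ℝ κ x ∘L fderiv ℝ ψ (κ x) = .id ℝ P :=
    (hκ.comp (κ x) hψ).unique ((hasFDerivAt_id (κ x)).congr_of_eventuallyEq h.left_inv)
  exact LeftInverse.injective (g := fderiv ℝ κ x) fun v => DFunLike.congr_fun hid v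

lemma tendsto_coord_nearestPoint [LocallyCompactSpace S] (h : IsLocalParametrization S x ψ κ)
    (hx : x ∈ S) : Tendsto (fun z => κ (nearestPoint S z)) (𝓝 x) (𝓝 (κ x)) :=
  (h.differentiableAt_coord.continuousAt.mono_left nhdsWithin_le_nhds).comp
    (tendsto_nearestPoint hx)

lemma eventually_isLocalMin_dist_coord_nearestPoint [LocallyCompactSpace S]
    (h : IsLocalParametrization S x ψ κ) (hx : x ∈ S) :
    ∀ᶠ z in 𝓝 x, IsLocalMin (fun k => dist z (ψ k)) (κ (nearestPoint S z)) := by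
  filter_upwards [eventually_isNearestPoint_nearestPoint hx,
    (tendsto_nearestPoint hx).eventually h.right_inv,
    (h.tendsto_coord_nearestPoint hx).eventually h.mem.eventually_nhds] with z hz hψκ hmem
  filter_upwards [hmem] with k hk
  rw [hψκ]
  exact hz.2 hk

end IsLocalParametrization

lemma IsSubmanifoldOfDim.exists_isLocalParametrization [FiniteDimensional ℝ E] {d : ℕ} {S : Set E}
    (hS : IsSubmanifoldOfDim d S) {x : E} (hx : x ∈ S) :
    ∃ (K : Submodule ℝ E) (ψ : K → E) (κ : E → K), IsLocalParametrization S x ψ κ := by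
  obtain ⟨U, V, φ, ψ, K, -, hU, hV, hxU, hφ, hψ, hUV, hVU, hψφ, hφψ, hSU⟩ := hS x hx
  obtain ⟨π, hπ⟩ : ∃ π : E →L[ℝ] K, ∀ k : K, π k = k :=
    Submodule.ClosedComplemented.of_finiteDimensional K
  have hmem : ∀ y ∈ U, (y ∈ S ↔ φ y ∈ K) := fun y hy => by
    simpa [hy] using Set.ext_iff.1 hSU y
  have hπφ : ∀ y ∈ U, y ∈ S → (π (φ y) : E) = φ y := fun y hy hyS =>
    congrArg Subtype.val (hπ ⟨φ y, (hmem y hy).1 hyS⟩)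
  have hV_nhds : ∀ᶠ k : K in 𝓝 (π (φ x)), (k : E) ∈ V :=
    continuous_subtype_val.continuousAt.eventually_mem
      (hV.mem_nhds ((hπφ x hxU hx).symm ▸ hUV hxU))
  refine ⟨K, fun k => ψ k, fun y => π (φ y), ?_, ?_, ?_, ?_, ?_⟩
  · filter_upwards [hV_nhds] with k hk
    exact (hψ.contDiffAt (hV.mem_nhds hk)).comp k K.subtypeL.contDiff.contDiffAt
  · filter_upwards [hV_nhds] with k hk
    rw [hmem _ (hVU hk), hφψ _ hk]
    exact k.2
  · filter_upwards [hV_nhds] with k hk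
    rw [hφψ _ hk, hπ]
  · exact π.differentiableAt.comp x
      ((hφ.contDiffAt (hU.mem_nhds hxU)).differentiableAt (by simp))
  · filter_upwards [self_mem_nhdsWithin, nhdsWithin_le_nhds (hU.mem_nhds hxU)] with y hyS hyU
    rw [hπφ y hyU hyS, hψφ y hyU]

lemma IsSubmanifoldOfDim.isLocallyClosed [FiniteDimensional ℝ E] {d : ℕ} {S : Set E}
    (hS : IsSubmanifoldOfDim d S) : IsLocallyClosed S := by
  refine ((isLocallyClosed_tfae S).out 0 2).2 fun x hx => ?_
  obtain ⟨U, V, φ, ψ, K, -, hU, -, hxU, hφ, -, -, -, -, -, hSU⟩ := hS x hx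
  refine ⟨U, hU.mem_nhds hxU, ?_⟩
  have hpre : Subtype.val ⁻¹' S = (fun y : U => φ y) ⁻¹' (K : Set E) := by
    ext y
    simpa using Set.ext_iff.1 hSU y
  rw [hpre]
  exact K.closed_of_finiteDimensional.preimage hφ.continuousOn.domRestrict

end LocalParametrization

section TubularNeighborhood

variable {E : Type*} [NormedAddCommGroup E] [InnerProductSpace ℝ E] {S : Set E}

lemma IsLocalParametrization.eventually_contDiffAt_nearestPoint {P : Type*}
    [NormedAddCommGroup P] [NormedSpace ℝ P] [FiniteDimensional ℝ P] [CompleteSpace E]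
    [LocallyCompactSpace S] {x : E} {ψ : P → E} {κ : E → P} (h : IsLocalParametrization S x ψ κ)
    (hx : x ∈ S) : ∀ᶠ z in 𝓝 x, ContDiffAt ℝ ∞ (nearestPoint S) z := by
  obtain ⟨ρ, hρ, hρx, huniq⟩ := exists_contDiffAt_eq_of_isLocalMin_dist (n := ∞) (by simp)
    h.contDiffAt (h.injective_fderiv hx)
  rw [h.apply_coord hx] at hρ hρx huniq
  have hρ_tendsto : Tendsto ρ (𝓝 x) (𝓝 (κ x)) :=
    hρx ▸ hρ.self_of_nhds.continuousAt.tendsto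
  have hproj : ∀ᶠ z in 𝓝 x, nearestPoint S z = ψ (ρ z) := by
    filter_upwards [h.eventually_isLocalMin_dist_coord_nearestPoint hx,
      (tendsto_nearestPoint hx).eventually h.right_inv,
      (Filter.tendsto_id.prodMk_nhds (h.tendsto_coord_nearestPoint hx)).eventually huniq]
      with z hmin hψκ hρz
    exact ((congrArg ψ (hρz hmin)).trans hψκ).symm
  filter_upwards [hρ, hρ_tendsto.eventually h.contDiffAt, hproj.eventually_nhds]
    with z hρz hψz hprojz
  exact (hψz.comp z hρz).congr_of_eventuallyEq hprojz

lemma IsSubmanifoldOfDim.exists_contDiffOn_retraction [FiniteDimensional ℝ E] {d : ℕ}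
    (hS : IsSubmanifoldOfDim d S) :
    ∃ (W : Set E) (r : E → E), IsOpen W ∧ S ⊆ W ∧ ContDiffOn ℝ ∞ r W ∧ MapsTo r W S ∧
      ∀ x ∈ S, r x = x := by
  have : CompleteSpace E := FiniteDimensional.complete ℝ E
  have : ProperSpace E := FiniteDimensional.proper ℝ E
  have : LocallyCompactSpace S := hS.isLocallyClosed.locallyCompactSpace
  refine ⟨{z | ∀ᶠ w in 𝓝 z, ContDiffAt ℝ ∞ (nearestPoint S) w ∧ nearestPoint S w ∈ S},
    nearestPoint S, isOpen_setOfPred_eventually_nhds, fun x hx => ?_,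
    fun z hz => hz.self_of_nhds.1.contDiffWithinAt, fun z hz => hz.self_of_nhds.2,
    fun x hx => nearestPoint_of_mem hx⟩
  obtain ⟨K, ψ, κ, h⟩ := hS.exists_isLocalParametrization hx
  exact (h.eventually_contDiffAt_nearestPoint hx).and
    ((eventually_isNearestPoint_nearestPoint hx).mono fun _ hz => hz.1)

end TubularNeighborhood

section RelativeApproximation

variable {E F : Type*} [NormedAddCommGroup E] [NormedSpace ℝ E]
  [NormedAddCommGroup F] [NormedSpace ℝ F] {M : Set E} {f : E → F}

lemma contDiffOn_extend_of_contMDiff {O : TopologicalSpace.Opens E} {n : ℕ∞ω} {g : O → F}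
    (hg : ContMDiff 𝓘(ℝ, E) 𝓘(ℝ, F) n g) :
    ContDiffOn ℝ n (Subtype.val.extend g 0) O := by
  intro x hx
  have hext : (fun y : O => Subtype.val.extend g 0 (y : E)) = g :=
    funext (Subtype.val_injective.extend_apply g 0)
  have hgx := hg ⟨x, hx⟩
  rw [← hext, contMDiffAt_subtype_iff] at hgx
  exact hgx.contDiffAt.contDiffWithinAt

variable [FiniteDimensional ℝ E]

lemma exists_contDiffOn_forall_mem_convex_of_local {n : ℕ∞} {t : E → Set F}
    (ht : ∀ x, Convex ℝ (t x))
    (hloc : ∀ x ∈ M, ∃ U ∈ 𝓝 x, ∃ g : E → F, ContDiffOn ℝ n g U ∧ ∀ y ∈ U, g y ∈ t y) :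
    ∃ (O : Set E) (g : E → F), IsOpen O ∧ M ⊆ O ∧ ContDiffOn ℝ n g O ∧ ∀ x ∈ O, g x ∈ t x := by
  choose! U hU g hg hgt using hloc
  let O : TopologicalSpace.Opens E := ⟨⋃ x ∈ M, interior (U x), isOpen_biUnion fun _ _ =>
    isOpen_interior⟩
  have : LocallyCompactSpace O := O.isOpen.locallyCompactSpace
  obtain ⟨G, hG⟩ := exists_contMDiffMap_forall_mem_convex_of_local (n := n) 𝓘(ℝ, E)
    (t := fun y : O => t y) (fun y => ht y) (fun y => by
      obtain ⟨x, hx, hyx⟩ := mem_iUnion₂.1 y.2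
      have hUy : U x ∈ 𝓝 (y : E) := mem_interior_iff_mem_nhds.1 hyx
      exact ⟨Subtype.val ⁻¹' U x, continuous_subtype_val.continuousAt.preimage_mem_nhds hUy,
        fun z => g x z, (hg x hx).contMDiffOn.comp (contMDiff_subtype_val.contMDiffOn) fun _ => id,
        fun z => hgt x hx z⟩)
  refine ⟨O, Subtype.val.extend G 0, O.isOpen,
    fun x hx => mem_biUnion hx (mem_interior_iff_mem_nhds.2 (hU x hx)),
    contDiffOn_extend_of_contMDiff G.contMDiff, fun x hx => ?_⟩
  rw [Subtype.val_injective.extend_apply G 0 (⟨x, hx⟩ : O)]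
  exact hG ⟨x, hx⟩

lemma exists_contDiffOn_edist_lt_and_eqOn {n : ℕ∞} {C U : Set E} {ε : E → ENNReal}
    (hf : ContinuousOn f M) (hε : ContinuousOn ε M) (hε_pos : ∀ x ∈ M, 0 < ε x)
    (hC : IsClosed C) (hU : IsOpen U) (hCU : M ∩ C ⊆ U) (hfU : ContDiffOn ℝ n f U) :
    ∃ (O : Set E) (g : E → F), IsOpen O ∧ M ⊆ O ∧ ContDiffOn ℝ n g O ∧
      (∀ x ∈ M, edist (g x) (f x) < ε x) ∧ EqOn g f (M ∩ C) := by
  let t : E → Set F := fun x => {w | x ∈ M → w ∈ Metric.eball (f x) (ε x) ∩ {w | x ∈ C → w = f x}}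
  have ht : ∀ x, Convex ℝ (t x) := fun x =>
    ((convex_eball _ _).inter (convex_singleton _).setOfPred_const_imp).setOfPred_const_imp
  have hball : ∀ x ∈ M, f x ∈ Metric.eball (f x) (ε x) := fun x hx =>
    Metric.mem_eball_self (hε_pos x hx)
  obtain ⟨O, g, hO, hMO, hg, hgt⟩ := exists_contDiffOn_forall_mem_convex_of_local (n := n) (M := M)
    ht fun x hx => by
      by_cases hxC : x ∈ C
      · exact ⟨U, hU.mem_nhds (hCU ⟨hx, hxC⟩), f, hfU, fun y _ hy => ⟨hball y hy, fun _ => rfl⟩⟩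
      · have hnear : ∀ᶠ y in 𝓝[M] x, edist (f x) (f y) < ε y :=
          (tendsto_const_nhds.edist (hf x hx)).eventually_lt (hε x hx) (hball x hx)
        refine ⟨_, (eventually_nhdsWithin_iff.1 hnear).and (hC.isOpen_compl.eventually_mem hxC),
          fun _ => f x, contDiffOn_const, fun y hy hyM => ⟨hy.1 hyM, fun hyC => absurd hyC hy.2⟩⟩
  exact ⟨O, g, hO, hMO, hg, fun x hx => (hgt x (hMO hx) hx).1,
    fun x hx => (hgt x (hMO hx.1) hx.1).2 hx.2⟩

lemma exists_contDiffOn_segment_subset_and_eqOn {n : ℕ∞} {W : Set F} {C U : Set E}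
    (hW : IsOpen W) (hf : ContinuousOn f M) (hfW : MapsTo f M W)
    (hC : IsClosed C) (hU : IsOpen U) (hCU : M ∩ C ⊆ U) (hfU : ContDiffOn ℝ n f U) :
    ∃ (O : Set E) (g : E → F), IsOpen O ∧ M ⊆ O ∧ ContDiffOn ℝ n g O ∧
      (∀ x ∈ M, segment ℝ (f x) (g x) ⊆ W) ∧ EqOn g f (M ∩ C) := by
  have hpos : ∀ x ∈ M, 0 < Metric.infEDist (f x) Wᶜ := fun x hx => by
    rw [Metric.infEDist_pos_iff_notMem_closure, hW.isClosed_compl.closure_eq, notMem_compl_iff]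
    exact hfW hx
  obtain ⟨O, g, hO, hMO, hg, hgf, hgC⟩ := exists_contDiffOn_edist_lt_and_eqOn hf
    (Metric.continuous_infEDist.comp_continuousOn hf) hpos hC hU hCU hfU
  refine ⟨O, g, hO, hMO, hg, fun x hx => ?_, hgC⟩
  have hball : Metric.eball (f x) (Metric.infEDist (f x) Wᶜ) ⊆ W := fun w hw => by
    by_contra hwW
    rw [Metric.mem_eball, edist_comm] at hw
    exact hw.not_ge (Metric.infEDist_le_edist_of_mem hwW)
  exact ((convex_eball _ _).segment_subset (Metric.mem_eball_self (hpos x hx)) (hgf x hx)).trans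
    hball

end RelativeApproximation

theorem homotopic_to_smooth_general {E F : Type*} [NormedAddCommGroup E] [NormedSpace ℝ E]
    [FiniteDimensional ℝ E] [NormedAddCommGroup F] [InnerProductSpace ℝ F] [FiniteDimensional ℝ F]
    {d : ℕ} {M C U : Set E} {N : Set F} {f : E → F} (hN : IsSubmanifoldOfDim d N)
    (hf : ContinuousOn f M) (hfN : MapsTo f M N) (hC : IsClosed C) (hU : IsOpen U)
    (hCU : M ∩ C ⊆ U) (hfU : ContDiffOn ℝ ∞ f U) :
    ∃ H : E × ℝ → F,
      ContinuousOn H (M ×ˢ Icc (0 : ℝ) 1) ∧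
      MapsTo H (M ×ˢ Icc (0 : ℝ) 1) N ∧
      (∀ x ∈ M, H (x, 0) = f x) ∧
      (∃ V, IsOpen V ∧ M ⊆ V ∧ ContDiffOn ℝ ∞ (fun x => H (x, 1)) V) ∧
      (∀ x ∈ M ∩ C, ∀ t ∈ Icc (0 : ℝ) 1, H (x, t) = f x) := by
  obtain ⟨W, r, hW, hNW, hr, hrN, hr_id⟩ := hN.exists_contDiffOn_retraction
  obtain ⟨O, g, hO, hMO, hg, hseg, hgf⟩ :=
    exists_contDiffOn_segment_subset_and_eqOn hW hf (hfN.mono_right hNW) hC hU hCU hfU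
  have hline : MapsTo (fun p : E × ℝ => AffineMap.lineMap (f p.1) (g p.1) p.2)
      (M ×ˢ Icc (0 : ℝ) 1) W := fun p hp =>
    hseg p.1 hp.1 (segment_eq_image_lineMap ℝ (f p.1) (g p.1) ▸ mem_image_of_mem _ hp.2)
  refine ⟨fun p => r (AffineMap.lineMap (f p.1) (g p.1) p.2), ?_, hrN.comp hline, fun x hx => ?_,
    ⟨O ∩ g ⁻¹' W, hg.continuousOn.isOpen_inter_preimage hO hW,
      fun x hx => ⟨hMO hx, hseg x hx (right_mem_segment ℝ _ _)⟩, ?_⟩, fun x hx t _ => ?_⟩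
  · exact hr.continuousOn.comp ((hf.comp continuousOn_fst fun p hp => hp.1).lineMap
      (hg.continuousOn.comp continuousOn_fst fun p hp => hMO hp.1) continuousOn_snd) hline
  · simpa using hr_id _ (hfN hx)
  · simp only [AffineMap.lineMap_apply_one]
    exact hr.comp (hg.mono inter_subset_left) fun _ hx => hx.2
  · simpa [hgf hx] using hr_id _ (hfN hx.1)

/-- Every continuous map `f : M → N` between smooth manifolds is homotopic to a smooth map;
if `f` is smooth on a neighborhood of a closed subset `A ⊂ M`, the homotopy can be chosen
relative to `A`, so the resulting smooth map agrees with `f` on `A`. -/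
theorem homotopic_to_smooth (a b m dN : ℕ) (M : Set (Euc a)) (N : Set (Euc b))
    (hM : IsSubmanifoldOfDim m M) (hN : IsSubmanifoldOfDim dN N)
    (f : Euc a → Euc b) (hf : ContinuousOn f M) (hmaps : MapsTo f M N)
    (A C : Set (Euc a)) (hC : IsClosed C) (hA : A = M ∩ C)
    (UA : Set (Euc a)) (hUA : IsOpen UA) (hAUA : A ⊆ UA)
    (hfA : ContDiffOn ℝ (⊤ : ℕ∞) f UA) :
    ∃ H : Euc a × ℝ → Euc b,
      ContinuousOn H (M ×ˢ Icc (0:ℝ) 1) ∧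
      MapsTo H (M ×ˢ Icc (0:ℝ) 1) N ∧
      (∀ x ∈ M, H (x, 0) = f x) ∧
      -- the time-1 map is smooth (it extends smoothly to a neighborhood of M)
      (∃ V, IsOpen V ∧ M ⊆ V ∧ ContDiffOn ℝ (⊤ : ℕ∞) (fun x => H (x, 1)) V) ∧
      -- the homotopy is relative to A
      (∀ x ∈ A, ∀ t ∈ Icc (0:ℝ) 1, H (x, t) = f x) := by
  subst hA
  exact homotopic_to_smooth_general hN hf hmaps hC hUA hAUA hfA
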